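/- Let Q(x,y,z) ∈ ℝ[x,y,z] be a cubic form and let C ⊆ S² be a curve (the image of a nonconstant continuous injective map from [0,1] into S²) such that for all a ≠ b in C the linear form Q_{ab} = ∂_a∂_b Q vanishes identically. Then Q is a function of two variables in some linear coordinate system; equivalently, there exists a nonzero vector w ∈ ℝ³ with ∂_w Q ≡ 0. -/

import Mathlib

open MvPolynomial

/-- Directional derivative `∂ₑQ` of a polynomial `Q` in direction `e`. -/
noncomputable def dirDeriv (e : Fin 3 → ℝ) (Q : MvPolynomial (Fin 3) ℝ) :
    MvPolynomial (Fin 3) ℝ :=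
  ∑ i, MvPolynomial.C (e i) * MvPolynomial.pderiv i Q

/-!
If `a` is in the span of `S \ {a}` and a bilinear map vanishes at all pairs of distinct points of
`S`, then it also vanishes at `(a, a)`: no limiting argument is needed to reach the diagonal. Only
finitely many points of `S` are not in the span of the others. If `S` is infinite and has finitely
many points on each line through the origin, then the second derivatives of `Q` therefore vanish on
a subspace `W` of dimension at least `2`.

In dimension at most `3`, `W` and a single vector `c` span the whole space. For `w ∈ W`, the form
`∂_w Q`, of degree `n` say, is invariant along `W`, so it is a multiple of the `n`-th power of a
linear form and vanishes as soon as the constant `∂_c ^ n ∂_w Q` does. This is one linear condition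
on `w`, so it has a nonzero solution in `W`.
-/

section NonColoops

variable {R K V M : Type*}

variable (R) in
/-- The elements of `S` lying in the span of the other elements: over a field, the non-coloops of
the linear matroid on `S`. -/
def nonColoops [Semiring R] [AddCommMonoid V] [Module R V] (S : Set V) : Set V :=
  {a ∈ S | a ∈ Submodule.span R (S \ {a})}

theorem nonColoops_subset [Semiring R] [AddCommMonoid V] [Module R V] (S : Set V) :
    nonColoops R S ⊆ S :=
  Set.sep_subset _ _

theorem apply_eq_zero_of_mem_span_nonColoops [CommSemiring R] [AddCommMonoid V] [Module R V]
    [AddCommMonoid M] [Module R M] {B : V →ₗ[R] V →ₗ[R] M} {S : Set V}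
    (hB : S.Pairwise fun a b => B a b = 0) {u v : V}
    (hu : u ∈ Submodule.span R (nonColoops R S)) (hv : v ∈ Submodule.span R (nonColoops R S)) :
    B u v = 0 := by
  have hdiag (a : V) (ha : a ∈ nonColoops R S) : B a a = 0 := by
    have hle : Submodule.span R (S \ {a}) ≤ LinearMap.ker (B a) :=
      Submodule.span_le.mpr fun _ hb => hB ha.1 hb.1 (Ne.symm hb.2)
    exact hle ha.2
  have hmem (a : V) (ha : a ∈ nonColoops R S) (b : V) (hb : b ∈ nonColoops R S) : B a b = 0 := by
    obtain rfl | hab := eq_or_ne a b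
    exacts [hdiag a ha, hB ha.1 hb.1 hab]
  induction hu, hv using Submodule.span_induction₂ with
  | mem_mem a b ha hb => exact hmem a ha b hb
  | zero_left => simp
  | zero_right => simp
  | add_left _ _ _ _ _ _ h₁ h₂ => simp [h₁, h₂]
  | add_right _ _ _ _ _ _ h₁ h₂ => simp [h₁, h₂]
  | smul_left _ _ _ _ _ h => simp [h]
  | smul_right _ _ _ _ _ h => simp [h]

variable [DivisionRing K] [AddCommGroup V] [Module K V]

theorem linearIndepOn_sdiff_nonColoops (S : Set V) :
    LinearIndepOn K id (S \ nonColoops K S) := by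
  rw [linearIndepOn_iff_notMem_span]
  rintro a ⟨haS, ha⟩ hspan
  rw [Set.image_id] at hspan
  exact ha ⟨haS, Submodule.span_mono (Set.sdiff_subset_sdiff_left Set.sdiff_subset) hspan⟩

theorem infinite_nonColoops [FiniteDimensional K V] {S : Set V} (hS : S.Infinite) :
    (nonColoops K S).Infinite := fun hfin =>
  hS <| ((linearIndepOn_sdiff_nonColoops (K := K) S).linearIndependent.setFinite.union hfin).subset
    (by rw [Set.sdiff_union_of_subset (nonColoops_subset S)])

theorem one_lt_finrank_span_nonColoops [FiniteDimensional K V] {S : Set V} (hS : S.Infinite)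
    (hline : ∀ v : V, (S ∩ Submodule.span K {v}).Finite) :
    1 < Module.finrank K (Submodule.span K (nonColoops K S)) := by
  by_contra! hrank
  obtain ⟨v, hv⟩ := (Submodule.finrank_le_one_iff_isPrincipal _).mp hrank
  refine infinite_nonColoops (K := K) hS ((hline v).subset fun a ha => ⟨nonColoops_subset S ha, ?_⟩)
  exact hv ▸ Submodule.subset_span ha

end NonColoops

theorem exists_sup_span_singleton_eq_top {K V : Type*} [DivisionRing K] [AddCommGroup V]
    [Module K V] [FiniteDimensional K V] (W : Submodule K V)
    (hW : Module.finrank K V ≤ Module.finrank K W + 1) :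
    ∃ c : V, W ⊔ Submodule.span K {c} = ⊤ := by
  obtain ⟨U, hU⟩ := W.exists_isCompl
  have hrank := Submodule.finrank_add_eq_of_isCompl hU
  obtain ⟨c, rfl⟩ := (Submodule.finrank_le_one_iff_isPrincipal U).mp (by lia)
  exact ⟨c, hU.sup_eq_top⟩

theorem finite_sum_sq_eq_one_inter_span_singleton {R ι : Type*} [CommRing R] [IsDomain R]
    [Fintype ι] (v : ι → R) :
    ({x : ι → R | ∑ i, x i ^ 2 = 1} ∩ Submodule.span R {v}).Finite := by
  obtain hempty | ⟨u, hu, huv⟩ :=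
    ({x : ι → R | ∑ i, x i ^ 2 = 1} ∩ Submodule.span R {v}).eq_empty_or_nonempty
  · exact hempty ▸ Set.finite_empty
  refine (Set.toFinite {u, -u}).subset ?_
  rintro x ⟨hx, hxv⟩
  obtain ⟨r, rfl⟩ := Submodule.mem_span_singleton.mp huv
  obtain ⟨s, rfl⟩ := Submodule.mem_span_singleton.mp hxv
  simp only [Set.mem_ofPred_eq, Pi.smul_apply, smul_eq_mul, mul_pow, ← Finset.mul_sum] at hu hx
  have hsq : s ^ 2 = r ^ 2 := mul_right_cancel₀ (right_ne_zero_of_mul_eq_one hu) (hx.trans hu.symm)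
  obtain rfl | rfl := sq_eq_sq_iff_eq_or_eq_neg.mp hsq <;> simp

section DirectionalDeriv

variable {R σ : Type*}

theorem pderiv_commute [CommRing R] (i j : σ) :
    Commute (pderiv (R := R) i).toLinearMap (pderiv j).toLinearMap := by
  have hbracket : ⁅pderiv (R := R) i, pderiv (R := R) j⁆ = 0 :=
    derivation_ext fun k => by
      classical
      simp only [Derivation.commutator_apply, pderiv_X, Pi.single_apply]
      split_ifs <;> simp
  refine LinearMap.ext fun P => ?_
  simpa [Derivation.commutator_apply, sub_eq_zero] using DFunLike.congr_fun hbracket P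

variable [Fintype σ]

/-- The derivative `∂ᵥP` of a polynomial `P` in the direction `v`, bundled as a bilinear map. It
extends `dirDeriv` to arbitrary coefficients and variables. -/
noncomputable def directionalDeriv [CommSemiring R] :
    (σ → R) →ₗ[R] Module.End R (MvPolynomial σ R) :=
  Fintype.linearCombination R fun i => (pderiv i).toLinearMap

theorem directionalDeriv_apply [CommSemiring R] (v : σ → R) (P : MvPolynomial σ R) :
    directionalDeriv v P = ∑ i, v i • pderiv i P := by
  simp [directionalDeriv, Fintype.linearCombination_apply]

theorem directionalDeriv_single [CommSemiring R] [DecidableEq σ] (i : σ) (P : MvPolynomial σ R) :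
    directionalDeriv (Pi.single i 1) P = pderiv i P := by
  simp [directionalDeriv]

theorem dirDeriv_eq_directionalDeriv (e : Fin 3 → ℝ) (Q : MvPolynomial (Fin 3) ℝ) :
    dirDeriv e Q = directionalDeriv e Q := by
  simp only [dirDeriv, directionalDeriv_apply, C_mul']

theorem directionalDeriv_commute [CommRing R] (u v : σ → R) :
    Commute (directionalDeriv u) (directionalDeriv v) := by
  simp only [directionalDeriv, Fintype.linearCombination_apply]
  exact Commute.sum_left _ _ _ fun i _ => Commute.sum_right _ _ _ fun j _ =>
    ((pderiv_commute i j).smul_left _).smul_right _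

theorem directionalDeriv_comm [CommRing R] (u v : σ → R) (P : MvPolynomial σ R) :
    directionalDeriv u (directionalDeriv v P) = directionalDeriv v (directionalDeriv u P) :=
  LinearMap.congr_fun (directionalDeriv_commute u v).eq P

theorem isHomogeneous_directionalDeriv [CommSemiring R] {n : ℕ} {P : MvPolynomial σ R}
    (hP : P.IsHomogeneous n) (v : σ → R) : (directionalDeriv v P).IsHomogeneous (n - 1) := by
  simp only [directionalDeriv_apply, ← C_mul']
  exact IsHomogeneous.sum _ _ _ fun i _ => hP.pderiv.C_mul (v i)

theorem isHomogeneous_directionalDeriv_pow [CommSemiring R] {n : ℕ} {P : MvPolynomial σ R}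
    (hP : P.IsHomogeneous n) (v : σ → R) (k : ℕ) :
    ((directionalDeriv v ^ k) P).IsHomogeneous (n - k) := by
  induction k with
  | zero => simpa using hP
  | succ k ih =>
    rw [pow_succ', Module.End.mul_apply, ← Nat.sub_sub]
    exact isHomogeneous_directionalDeriv ih v

/-- The lineality space of a polynomial: the directions along which its derivative vanishes
identically. Over a field of characteristic zero, `P` is a function of fewer variables in some
linear coordinate system exactly when this space is nonzero. -/
noncomputable def linealitySpace [CommSemiring R] (P : MvPolynomial σ R) : Submodule R (σ → R) :=
  LinearMap.ker (directionalDeriv.flip P)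

theorem mem_linealitySpace [CommSemiring R] {P : MvPolynomial σ R} {v : σ → R} :
    v ∈ linealitySpace P ↔ directionalDeriv v P = 0 :=
  Iff.rfl

theorem linealitySpace_le_linealitySpace_directionalDeriv [CommRing R] (P : MvPolynomial σ R)
    (v : σ → R) : linealitySpace P ≤ linealitySpace (directionalDeriv v P) := fun u hu => by
  rw [mem_linealitySpace] at hu ⊢
  rw [directionalDeriv_comm, hu, map_zero]

theorem eq_zero_of_linealitySpace_eq_top [CommSemiring R] [IsAddTorsionFree R] {n : ℕ}
    {P : MvPolynomial σ R} (hP : P.IsHomogeneous n) (hn : n ≠ 0) (htop : linealitySpace P = ⊤) :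
    P = 0 := by
  classical
  have hpderiv (i : σ) : pderiv i P = 0 := by
    rw [← directionalDeriv_single, ← mem_linealitySpace, htop]
    exact Submodule.mem_top
  have heuler : n • P = 0 := by simp [← hP.sum_X_mul_pderiv, hpderiv]
  exact (smul_eq_zero.mp heuler).resolve_left hn

theorem eq_zero_of_directionalDeriv_pow_eq_zero [CommRing R] [IsAddTorsionFree R] {n : ℕ}
    {P : MvPolynomial σ R} (hP : P.IsHomogeneous n) {c : σ → R}
    (hc : linealitySpace P ⊔ Submodule.span R {c} = ⊤)
    (hzero : (directionalDeriv c ^ n) P = 0) : P = 0 := by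
  induction n generalizing P with
  | zero => simpa using hzero
  | succ n ih =>
    have hderiv : directionalDeriv c P = 0 := by
      refine ih (isHomogeneous_directionalDeriv hP c) (top_le_iff.mp ?_) ?_
      · rw [← hc]
        gcongr
        exact linealitySpace_le_linealitySpace_directionalDeriv P c
      · rwa [pow_succ, Module.End.mul_apply] at hzero
    refine eq_zero_of_linealitySpace_eq_top hP n.succ_ne_zero ?_
    rwa [sup_eq_left.mpr] at hc
    exact (Submodule.span_singleton_le_iff_mem _ _).mpr hderiv

variable {K : Type*} [Field K] [CharZero K]

theorem exists_directionalDeriv_eq_zero_of_codim_le_one {d : ℕ} {Q : MvPolynomial σ K}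
    (hQ : Q.IsHomogeneous d) {W : Submodule K (σ → K)} {c : σ → K}
    (hc : W ⊔ Submodule.span K {c} = ⊤) (hW : 1 < Module.finrank K W)
    (hzero : ∀ u ∈ W, ∀ v ∈ W, directionalDeriv u (directionalDeriv v Q) = 0) :
    ∃ w ∈ W, w ≠ 0 ∧ directionalDeriv w Q = 0 := by
  let φ : W →ₗ[K] K :=
    lcoeff K 0 ∘ₗ (directionalDeriv c ^ (d - 1)) ∘ₗ directionalDeriv.flip Q ∘ₗ W.subtype
  have hker : LinearMap.ker φ ≠ ⊥ := LinearMap.ker_ne_bot_of_finrank_lt (by simpa using hW)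
  obtain ⟨⟨w, hw⟩, hφw, hw0⟩ := Submodule.exists_mem_ne_zero_of_ne_bot hker
  refine ⟨w, hw, by simpa using hw0, ?_⟩
  have hhom := isHomogeneous_directionalDeriv hQ w
  refine eq_zero_of_directionalDeriv_pow_eq_zero hhom (c := c) (top_le_iff.mp ?_) ?_
  · rw [← hc]
    gcongr
    exact fun u hu => hzero u hu w hw
  · have hconst := isHomogeneous_directionalDeriv_pow hhom c (d - 1)
    rw [Nat.sub_self, ← totalDegree_zero_iff_isHomogeneous, totalDegree_eq_zero_iff_eq_C] at hconst
    rw [hconst, ← C_0]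
    exact congrArg C hφw

theorem cubic_form_second_derivatives_vanish_on_curve_general (hσ : Fintype.card σ ≤ 3) {d : ℕ}
    {Q : MvPolynomial σ K} (hQ : Q.IsHomogeneous d) {S : Set (σ → K)} (hS : S.Infinite)
    (hline : ∀ v : σ → K, (S ∩ Submodule.span K {v}).Finite)
    (hzero : S.Pairwise fun a b => directionalDeriv a (directionalDeriv b Q) = 0) :
    ∃ w : σ → K, w ≠ 0 ∧ directionalDeriv w Q = 0 := by
  have hrank := one_lt_finrank_span_nonColoops hS hline
  obtain ⟨c, hc⟩ := exists_sup_span_singleton_eq_top (Submodule.span K (nonColoops K S))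
    (by rw [Module.finrank_fintype_fun_eq_card]; lia)
  obtain ⟨w, -, hw⟩ := exists_directionalDeriv_eq_zero_of_codim_le_one hQ hc hrank fun u hu v hv =>
    apply_eq_zero_of_mem_span_nonColoops
      (B := directionalDeriv.compl₂ (directionalDeriv.flip Q)) hzero hu hv
  exact ⟨w, hw⟩

end DirectionalDeriv

/-- Lemma 4: let `Q` be a cubic form on `ℝ³` and let `C ⊆ S²` be a curve (image of a
nonconstant continuous injective map `γ : [0,1] → S²`) such that for all `a ≠ b` on the
curve the linear form `Q_{ab} = ∂ₐ∂_b Q` vanishes identically. Then `Q` is a function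
of two variables in suitable linear coordinates; equivalently, some nonzero directional
derivative of `Q` vanishes identically. -/
theorem cubic_form_second_derivatives_vanish_on_curve
    (Q : MvPolynomial (Fin 3) ℝ) (hQ : Q.IsHomogeneous 3)
    (γ : ℝ → (Fin 3 → ℝ))
    (h_cont : ContinuousOn γ (Set.Icc 0 1))
    (h_inj : Set.InjOn γ (Set.Icc 0 1))
    (h_sph : ∀ t ∈ Set.Icc (0 : ℝ) 1, ∑ i, γ t i ^ 2 = 1)
    (h_van : ∀ s ∈ Set.Icc (0 : ℝ) 1, ∀ t ∈ Set.Icc (0 : ℝ) 1, γ s ≠ γ t →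
      dirDeriv (γ s) (dirDeriv (γ t) Q) = 0) :
    ∃ w : Fin 3 → ℝ, w ≠ 0 ∧ dirDeriv w Q = 0 := by
  simp only [dirDeriv_eq_directionalDeriv] at h_van ⊢
  refine cubic_form_second_derivatives_vanish_on_curve_general (Fintype.card_fin 3).le hQ
    ((Set.Icc_infinite zero_lt_one).image h_inj) (fun v => ?_) ?_
  · exact (finite_sum_sq_eq_one_inter_span_singleton v).subset
      (Set.inter_subset_inter_left _ (Set.image_subset_iff.mpr h_sph))
  · rintro _ ⟨s, hs, rfl⟩ _ ⟨t, ht, rfl⟩ hst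
    exact h_van s hs t ht hst
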